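/- Let ν > 0. For every x ∈ (0,1): lim_{ε→0+} D_2(x+iε)·D_2(x−iε) = e^{−νπi/2}, and for every x ∈ (−1,0): lim_{ε→0+} D_2(x+iε)·D_2(x−iε) = e^{νπi/2}. -/

import Mathlib

open Filter Real Topology

/-- `(z²-1)^{1/2} = z √(1 - z⁻²)`, the branch analytic on `ℂ∖[-1,1]` which is positive
for real `z > 1`. -/
noncomputable def sqBranch (z : ℂ) : ℂ := z * (1 - z⁻¹ ^ 2) ^ ((1 : ℂ) / 2)

/-- The second Szegő function
`D₂(z) = exp((ν/4) Log(((z²-1)^{1/2}-i)/((z²-1)^{1/2}+i)))`. -/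
noncomputable def D2 (ν : ℝ) (z : ℂ) : ℂ :=
  Complex.exp ((ν / 4 : ℂ) *
    Complex.log ((sqBranch z - Complex.I) / (sqBranch z + Complex.I)))

/-!
Let `w = (z² - 1)^{1/2}` and `Q = (w - i) / (w + i)`. Off the real axis `Q` avoids `(-∞, 0]`, and
`Q(-z) = 1 / Q(z)`, `Q(-z̄) = conj Q(z)`; hence `D₂(-z) = 1 / D₂(z)` and `D₂(z̄) = 1 / conj D₂(z)`.
So `D₂(z) D₂(z̄) = D₂(z) / conj D₂(z)` only sees the phase of `D₂(z)`. When `z` tends to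
`x ∈ (0, 1]` inside the first quadrant, `Q(z)` tends to a negative number from below, so its
argument tends to `-π` and the phase of `D₂(z)` to `e^{-νπi/4}`. The symmetry `z ↦ -z` transfers
this to `x < 0`.
-/

open Set
open Complex (I)
open scoped ComplexConjugate

lemma continuousOn_complexSqrt_im_nonneg : ContinuousOn Complex.sqrt {z | 0 ≤ z.im} := by
  have h : ContinuousOn (fun z : ℂ ↦ (√((‖z‖ + z.re) / 2) + √((‖z‖ - z.re) / 2) * I : ℂ))
      {z | 0 ≤ z.im} := by
    fun_prop
  refine h.congr fun z (hz : 0 ≤ z.im) ↦ ?_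
  simp only [Complex.sqrt_eq_real_add_ite, if_pos hz, one_mul]

lemma ne_zero_of_im_ne_zero {z : ℂ} (hz : z.im ≠ 0) : z ≠ 0 := by
  rintro rfl
  exact hz rfl

lemma one_sub_sq_mem_slitPlane {z : ℂ} (hz : z.im ≠ 0) : 1 - z ^ 2 ∈ Complex.slitPlane := by
  rw [Complex.mem_slitPlane_iff]
  by_cases hre : z.re = 0
  · left
    have : (1 - z ^ 2).re = 1 + z.im ^ 2 := by
      simp [pow_two, hre]
    rw [this]
    positivity
  · right
    have : (1 - z ^ 2).im = -2 * (z.re * z.im) := by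
      simp only [pow_two, Complex.sub_im, Complex.one_im, Complex.mul_im]
      ring
    rw [this]
    exact mul_ne_zero (by norm_num) (mul_ne_zero hre hz)

section sqBranch

lemma sqBranch_eq_mul_sqrt (z : ℂ) : sqBranch z = z * Complex.sqrt (1 - z⁻¹ ^ 2) := by
  rw [sqBranch, Complex.sqrt, one_div]

lemma sqBranch_sq {z : ℂ} (hz : z ≠ 0) : sqBranch z ^ 2 = z ^ 2 - 1 := by
  rw [sqBranch_eq_mul_sqrt, mul_pow, Complex.sqrt, Complex.cpow_ofNat_inv_pow]
  field_simp

lemma sqBranch_add_I_ne_zero {z : ℂ} (hz : z ≠ 0) : sqBranch z + I ≠ 0 := by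
  intro h
  have hsq := sqBranch_sq hz
  rw [eq_neg_of_add_eq_zero_left h, neg_sq, Complex.I_sq] at hsq
  exact hz (pow_eq_zero_iff two_ne_zero |>.mp (by linear_combination -hsq))

lemma sqBranch_neg (z : ℂ) : sqBranch (-z) = -sqBranch z := by
  simp only [sqBranch, inv_neg, even_two.neg_pow, neg_mul]

lemma re_mul_im_sqBranch {z : ℂ} (hz : z ≠ 0) :
    (sqBranch z).re * (sqBranch z).im = z.re * z.im := by
  have h := congrArg Complex.im (sqBranch_sq hz)
  simp only [pow_two, Complex.mul_im, Complex.sub_im, Complex.one_im] at h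
  linarith

lemma sqBranch_conj {z : ℂ} (hz : z.im ≠ 0) : sqBranch (conj z) = conj (sqBranch z) := by
  have hinv : z⁻¹.im ≠ 0 := by simpa [Complex.inv_im, ne_zero_of_im_ne_zero hz] using hz
  have harg := Complex.slitPlane_arg_ne_pi (one_sub_sq_mem_slitPlane hinv)
  have hhalf : conj (1 / 2 : ℂ) = 1 / 2 := by rw [map_div₀, map_one, Complex.conj_ofNat]
  have hu : 1 - (conj z)⁻¹ ^ 2 = conj (1 - z⁻¹ ^ 2) := by simp
  rw [sqBranch, sqBranch, hu, Complex.conj_cpow _ _ harg, hhalf, map_mul]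

lemma sqBranch_re_pos {z : ℂ} (hz : z ∈ Ioi 0 ×ℂ Ioi 0) : 0 < (sqBranch z).re := by
  obtain ⟨hre, him⟩ : 0 < z.re ∧ 0 < z.im := hz
  have hz0 : z ≠ 0 := ne_zero_of_im_ne_zero him.ne'
  -- `w² = z² - 1` only places `w` in the first or third quadrant; the branch is singled out by the
  -- principal square root `w / z` having nonnegative real part.
  have hr : 0 ≤ (Complex.sqrt (1 - z⁻¹ ^ 2)).re := by
    rw [Complex.sqrt, Complex.cpow_inv_two_re]
    positivity
  have hproj : 0 ≤ (sqBranch z).re * z.re + (sqBranch z).im * z.im := by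
    have : (sqBranch z).re * z.re + (sqBranch z).im * z.im
        = Complex.normSq z * (Complex.sqrt (1 - z⁻¹ ^ 2)).re := by
      rw [sqBranch_eq_mul_sqrt, Complex.normSq_apply, Complex.mul_re, Complex.mul_im]
      ring
    rw [this]
    exact mul_nonneg (Complex.normSq_nonneg z) hr
  have hprod : 0 < (sqBranch z).re * (sqBranch z).im := by
    rw [re_mul_im_sqBranch hz0]
    positivity
  obtain ⟨hpos, -⟩ | ⟨hwre, hwim⟩ := pos_and_pos_or_neg_and_neg_of_mul_pos hprod
  · exact hpos
  · linarith [mul_neg_of_neg_of_pos hwre hre, mul_neg_of_neg_of_pos hwim him]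

lemma continuousOn_sqBranch_quadrant : ContinuousOn sqBranch (Ioi 0 ×ℂ Ici 0) := by
  have hz0 : ∀ z ∈ Ioi 0 ×ℂ Ici 0, z ≠ 0 := fun z hz ↦ Complex.ne_zero_of_re_pos hz.1
  have hmaps : MapsTo (fun z : ℂ ↦ 1 - z⁻¹ ^ 2) (Ioi 0 ×ℂ Ici 0) {u | 0 ≤ u.im} := by
    intro z hz
    obtain ⟨hre, him⟩ : 0 < z.re ∧ 0 ≤ z.im := hz
    have : (1 - z⁻¹ ^ 2).im = 2 * z.re * z.im / Complex.normSq z ^ 2 := by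
      simp only [pow_two, Complex.sub_im, Complex.one_im, Complex.mul_im, Complex.inv_re,
        Complex.inv_im]
      ring
    rw [mem_ofPred_eq, this]
    positivity
  have hinner : ContinuousOn (fun z : ℂ ↦ 1 - z⁻¹ ^ 2) (Ioi 0 ×ℂ Ici 0) :=
    continuousOn_const.sub ((continuousOn_id.inv₀ hz0).pow 2)
  exact (continuousOn_id.mul (continuousOn_complexSqrt_im_nonneg.comp hinner hmaps)).congr
    fun z _ ↦ sqBranch_eq_mul_sqrt z

lemma sqBranch_ofReal {x : ℝ} (hx : x ∈ Ioc 0 1) : sqBranch x = I * √(1 - x ^ 2) := by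
  obtain ⟨hx0, hx1⟩ := hx
  have hnonneg : 0 ≤ x⁻¹ ^ 2 - 1 := sub_nonneg.mpr (one_le_pow₀ ((one_le_inv₀ hx0).mpr hx1))
  have hsqrt : x * √(x⁻¹ ^ 2 - 1) = √(1 - x ^ 2) := by
    rw [← Real.sqrt_sq hx0.le, ← Real.sqrt_mul (sq_nonneg x), Real.sqrt_sq hx0.le]
    congr 1
    field_simp
  have hu : (1 - (x : ℂ)⁻¹ ^ 2) = -((x⁻¹ ^ 2 - 1 : ℝ) : ℂ) := by
    push_cast
    ring
  rw [sqBranch_eq_mul_sqrt, hu, Complex.sqrt_neg_of_nonneg (by exact_mod_cast hnonneg),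
    Complex.sqrt_of_nonneg (by exact_mod_cast hnonneg), Complex.ofReal_re, ← hsqrt]
  push_cast
  ring

end sqBranch

/-- The argument `((z²-1)^{1/2} - i) / ((z²-1)^{1/2} + i)` of the logarithm in `D2`, that is, the
Cayley transform of `sqBranch z`. -/
noncomputable def szegoRatio (z : ℂ) : ℂ := (sqBranch z - I) / (sqBranch z + I)

section szegoRatio

lemma szegoRatio_neg (z : ℂ) : szegoRatio (-z) = (szegoRatio z)⁻¹ := by
  rw [szegoRatio, szegoRatio, sqBranch_neg, inv_div, ← neg_div_neg_eq]
  congr 1 <;> ring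

lemma szegoRatio_neg_conj {z : ℂ} (hz : z.im ≠ 0) :
    szegoRatio (-conj z) = conj (szegoRatio z) := by
  rw [szegoRatio_neg, szegoRatio, szegoRatio, sqBranch_conj hz, inv_div, map_div₀, map_sub, map_add,
    Complex.conj_I, sub_neg_eq_add, sub_eq_add_neg]

lemma szegoRatio_re (z : ℂ) :
    (szegoRatio z).re = (Complex.normSq (sqBranch z) - 1) / Complex.normSq (sqBranch z + I) := by
  simp only [szegoRatio, Complex.div_re, Complex.sub_re, Complex.sub_im, Complex.add_re,
    Complex.add_im, Complex.I_re, Complex.I_im, Complex.normSq_apply (sqBranch z)]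
  ring

lemma szegoRatio_im (z : ℂ) :
    (szegoRatio z).im = -2 * (sqBranch z).re / Complex.normSq (sqBranch z + I) := by
  simp only [szegoRatio, Complex.div_im, Complex.sub_re, Complex.sub_im, Complex.add_re,
    Complex.add_im, Complex.I_re, Complex.I_im]
  ring

lemma szegoRatio_mem_slitPlane {z : ℂ} (hz : z.im ≠ 0) : szegoRatio z ∈ Complex.slitPlane := by
  have hz0 := ne_zero_of_im_ne_zero hz
  have hden : 0 < Complex.normSq (sqBranch z + I) :=
    Complex.normSq_pos.mpr (sqBranch_add_I_ne_zero hz0)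
  rw [Complex.mem_slitPlane_iff, szegoRatio_re, szegoRatio_im]
  by_cases hw : (sqBranch z).re = 0
  · left
    have hre : z.re = 0 := by
      simpa [hw, hz] using re_mul_im_sqBranch hz0
    have hnorm : Complex.normSq (sqBranch z) = 1 + z.im ^ 2 := by
      have h := congrArg Complex.re (sqBranch_sq hz0)
      simp only [pow_two, Complex.mul_re, Complex.sub_re, Complex.one_re, hw, hre] at h
      rw [Complex.normSq_apply, hw]
      linarith
    rw [hnorm, add_sub_cancel_left]
    positivity
  · right
    exact div_ne_zero (mul_ne_zero (by norm_num) hw) hden.ne'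

lemma continuousOn_szegoRatio_quadrant : ContinuousOn szegoRatio (Ioi 0 ×ℂ Ici 0) := by
  refine (continuousOn_sqBranch_quadrant.sub continuousOn_const).div
    (continuousOn_sqBranch_quadrant.add continuousOn_const) ?_
  exact fun z hz ↦ sqBranch_add_I_ne_zero (Complex.ne_zero_of_re_pos hz.1)

lemma szegoRatio_im_neg {z : ℂ} (hz : z ∈ Ioi 0 ×ℂ Ioi 0) : (szegoRatio z).im < 0 := by
  have hw := sqBranch_re_pos hz
  have hden : 0 < Complex.normSq (sqBranch z + I) :=
    Complex.normSq_pos.mpr (sqBranch_add_I_ne_zero (ne_zero_of_im_ne_zero hz.2.ne'))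
  rw [szegoRatio_im]
  exact div_neg_of_neg_of_pos (by linarith) hden

lemma szegoRatio_ofReal_im {x : ℝ} (hx : x ∈ Ioc 0 1) : (szegoRatio x).im = 0 := by
  simp [szegoRatio_im, sqBranch_ofReal hx]

lemma szegoRatio_ofReal_re_neg {x : ℝ} (hx : x ∈ Ioc 0 1) : (szegoRatio x).re < 0 := by
  have hx0 : (x : ℂ) ≠ 0 := Complex.ofReal_ne_zero.mpr hx.1.ne'
  have hnorm : Complex.normSq (sqBranch x) = 1 - x ^ 2 := by
    have : 0 ≤ 1 - x ^ 2 := by nlinarith [hx.1, hx.2]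
    rw [sqBranch_ofReal hx, map_mul, Complex.normSq_I, Complex.normSq_ofReal, one_mul,
      Real.mul_self_sqrt this]
  rw [szegoRatio_re, hnorm]
  exact div_neg_of_neg_of_pos (by nlinarith [hx.1])
    (Complex.normSq_pos.mpr (sqBranch_add_I_ne_zero hx0))

lemma tendsto_szegoRatio_quadrant {x : ℝ} (hx : x ∈ Ioc 0 1) :
    Tendsto szegoRatio (𝓝[Ioi 0 ×ℂ Ioi 0] (x : ℂ)) (𝓝[{u | u.im < 0}] szegoRatio x) := by
  have hmem : (x : ℂ) ∈ Ioi 0 ×ℂ Ici 0 := by simpa [Complex.mem_reProdIm] using hx.1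
  have hsub : Ioi 0 ×ℂ Ioi 0 ⊆ Ioi 0 ×ℂ Ici 0 := fun z hz ↦
    Complex.mem_reProdIm.mpr ⟨hz.1, Ioi_subset_Ici_self hz.2⟩
  exact ((continuousOn_szegoRatio_quadrant _ hmem).mono hsub).tendsto_nhdsWithin
    fun z hz ↦ szegoRatio_im_neg hz

end szegoRatio

lemma tendsto_ofReal_add_mul_I_quadrant {x : ℝ} (hx : 0 < x) :
    Tendsto (fun ε : ℝ ↦ (x + ε * I : ℂ)) (𝓝[>] 0) (𝓝[Ioi 0 ×ℂ Ioi 0] (x : ℂ)) := by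
  have hcont : Continuous fun ε : ℝ ↦ (x + ε * I : ℂ) := by fun_prop
  refine tendsto_nhdsWithin_iff.mpr ⟨?_, ?_⟩
  · simpa using (hcont.tendsto 0).mono_left nhdsWithin_le_nhds
  · filter_upwards [self_mem_nhdsWithin] with ε hε
    simpa [Complex.mem_reProdIm, hx] using hε

section D2

variable (ν : ℝ)

lemma D2_eq_exp_log_szegoRatio (z : ℂ) :
    D2 ν z = Complex.exp (ν / 4 * Complex.log (szegoRatio z)) :=
  rfl

lemma D2_neg {z : ℂ} (hz : z.im ≠ 0) : D2 ν (-z) = (D2 ν z)⁻¹ := by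
  have harg := Complex.slitPlane_arg_ne_pi (szegoRatio_mem_slitPlane hz)
  simp only [D2_eq_exp_log_szegoRatio]
  rw [szegoRatio_neg, Complex.log_inv _ harg, mul_neg, Complex.exp_neg]

lemma D2_neg_conj {z : ℂ} (hz : z.im ≠ 0) : D2 ν (-conj z) = conj (D2 ν z) := by
  have harg := Complex.slitPlane_arg_ne_pi (szegoRatio_mem_slitPlane hz)
  simp only [D2_eq_exp_log_szegoRatio]
  rw [szegoRatio_neg_conj hz, Complex.log_conj _ harg, ← Complex.exp_conj]
  simp only [map_mul, map_div₀, Complex.conj_ofReal, Complex.conj_ofNat]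

lemma D2_conj {z : ℂ} (hz : z.im ≠ 0) : D2 ν (conj z) = (conj (D2 ν z))⁻¹ := by
  have hz' : (conj z).im ≠ 0 := by rwa [Complex.conj_im, neg_ne_zero]
  rw [← D2_neg_conj ν hz, D2_neg ν hz', inv_inv]

lemma tendsto_D2_quadrant {x : ℝ} (hx : x ∈ Ioc 0 1) :
    Tendsto (D2 ν) (𝓝[Ioi 0 ×ℂ Ioi 0] (x : ℂ))
      (𝓝 (Complex.exp (ν / 4 * (Real.log ‖szegoRatio x‖ - π * I)))) := by
  have hlog := (Complex.tendsto_log_nhdsWithin_im_neg_of_re_neg_of_im_zero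
    (szegoRatio_ofReal_re_neg hx) (szegoRatio_ofReal_im hx)).comp (tendsto_szegoRatio_quadrant hx)
  exact (hlog.const_mul (ν / 4 : ℂ)).cexp

lemma tendsto_D2_mul_D2_conj_quadrant {x : ℝ} (hx : x ∈ Ioc 0 1) :
    Tendsto (fun z ↦ D2 ν z * D2 ν (conj z)) (𝓝[Ioi 0 ×ℂ Ioi 0] (x : ℂ))
      (𝓝 (Complex.exp (-(ν * π * I / 2)))) := by
  have hlim := tendsto_D2_quadrant ν hx
  set L := (ν / 4 * (Real.log ‖szegoRatio x‖ - π * I) : ℂ) with hL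
  have hphase : Complex.exp L * (conj (Complex.exp L))⁻¹ = Complex.exp (-(ν * π * I / 2)) := by
    rw [← Complex.exp_conj, ← Complex.exp_neg, ← Complex.exp_add]
    congr 1
    simp only [hL, map_mul, map_sub, map_div₀, Complex.conj_ofReal, Complex.conj_ofNat,
      Complex.conj_I]
    ring
  have hconj : Tendsto (fun z ↦ (conj (D2 ν z))⁻¹) (𝓝[Ioi 0 ×ℂ Ioi 0] (x : ℂ))
      (𝓝 (conj (Complex.exp L))⁻¹) :=
    ((Complex.continuous_conj.tendsto _).comp hlim).inv₀
      ((map_ne_zero _).mpr (Complex.exp_ne_zero L))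
  rw [← hphase]
  refine (hlim.mul hconj).congr' ?_
  filter_upwards [self_mem_nhdsWithin] with z hz
  rw [D2_conj ν (ne_of_gt hz.2)]

lemma tendsto_D2_mul_D2_of_pos {x : ℝ} (hx : x ∈ Ioc 0 1) :
    Tendsto (fun ε : ℝ ↦ D2 ν (x + ε * I) * D2 ν (x - ε * I)) (𝓝[>] 0)
      (𝓝 (Complex.exp (-(ν * π * I / 2)))) := by
  refine ((tendsto_D2_mul_D2_conj_quadrant ν hx).comp
    (tendsto_ofReal_add_mul_I_quadrant hx.1)).congr fun ε ↦ ?_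
  simp [sub_eq_add_neg]

lemma tendsto_D2_mul_D2_neg {x : ℝ} {c : ℂ} (hc : c ≠ 0)
    (h : Tendsto (fun ε : ℝ ↦ D2 ν (x + ε * I) * D2 ν (x - ε * I)) (𝓝[>] 0) (𝓝 c)) :
    Tendsto (fun ε : ℝ ↦ D2 ν (-x + ε * I) * D2 ν (-x - ε * I)) (𝓝[>] 0) (𝓝 c⁻¹) := by
  refine (h.inv₀ hc).congr' ?_
  filter_upwards [self_mem_nhdsWithin] with ε (hε : 0 < ε)
  have hupper : D2 ν (-x + ε * I) = (D2 ν (x - ε * I))⁻¹ := by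
    rw [← D2_neg ν (by simpa using hε.ne'), neg_sub', sub_neg_eq_add]
  have hlower : D2 ν (-x - ε * I) = (D2 ν (x + ε * I))⁻¹ := by
    rw [← D2_neg ν (by simpa using hε.ne'), neg_add']
  rw [hupper, hlower, mul_inv, mul_comm]

lemma tendsto_D2_mul_D2_zero :
    Tendsto (fun ε : ℝ ↦ D2 ν (ε * I) * D2 ν (-(ε * I))) (𝓝[>] 0) (𝓝 1) := by
  refine tendsto_const_nhds.congr' ?_
  filter_upwards [self_mem_nhdsWithin] with ε (hε : 0 < ε)
  have hD2 : D2 ν (ε * I) ≠ 0 := Complex.exp_ne_zero _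
  rw [D2_neg ν (by simpa using hε.ne'), mul_inv_cancel₀ hD2]

theorem D2_boundary_values_general {x : ℝ} (hx : x ∈ Icc (-1) 1) :
    Tendsto (fun ε : ℝ ↦ D2 ν (x + ε * I) * D2 ν (x - ε * I)) (𝓝[>] 0)
      (𝓝 (Complex.exp (-(Real.sign x * ν * π * I / 2)))) := by
  obtain hneg | rfl | hpos := lt_trichotomy x 0
  · have hmem : -x ∈ Ioc 0 1 := ⟨neg_pos.mpr hneg, neg_le.mp hx.1⟩
    simpa [Real.sign_of_neg hneg, ← Complex.exp_neg, neg_div] using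
      tendsto_D2_mul_D2_neg ν (Complex.exp_ne_zero _) (tendsto_D2_mul_D2_of_pos ν hmem)
  · simpa using tendsto_D2_mul_D2_zero ν
  · simpa [Real.sign_of_pos hpos] using tendsto_D2_mul_D2_of_pos ν ⟨hpos, hx.2⟩

end D2

/-- **Lemma (boundary values of the second Szegő function).**
For `ν > 0` and `x ∈ (0,1)`: `D₂₊(x) D₂₋(x) = e^{-νπi/2}`, while for `x ∈ (-1,0)`:
`D₂₊(x) D₂₋(x) = e^{νπi/2}`, where `D₂±(x) = lim_{ε→0+} D₂(x ± iε)`. -/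
theorem D2_boundary_values (ν : ℝ) (hν : 0 < ν) (x : ℝ) :
    (x ∈ Set.Ioo (0 : ℝ) 1 →
      Tendsto (fun ε : ℝ => D2 ν (x + ε * Complex.I) * D2 ν (x - ε * Complex.I))
        (𝓝[>] 0) (𝓝 (Complex.exp (-(ν : ℂ) * π * Complex.I / 2)))) ∧
    (x ∈ Set.Ioo (-1 : ℝ) 0 →
      Tendsto (fun ε : ℝ => D2 ν (x + ε * Complex.I) * D2 ν (x - ε * Complex.I))
        (𝓝[>] 0) (𝓝 (Complex.exp ((ν : ℂ) * π * Complex.I / 2)))) := by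
  refine ⟨fun hx ↦ ?_, fun hx ↦ ?_⟩
  · simpa [Real.sign_of_pos hx.1, neg_div] using
      D2_boundary_values_general ν ⟨by linarith [hx.1], hx.2.le⟩
  · simpa [Real.sign_of_neg hx.2, neg_div] using
      D2_boundary_values_general ν ⟨hx.1.le, by linarith [hx.2]⟩
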